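/- Let q be a prime power and F a finite field containing 𝔽_q with [F : 𝔽_q] = d. Let z ∈ F, r ≥ 1, and φ_T(X) = zX + g₁X^q + ⋯ + g_rX^{q^r} ∈ F[X] with g_r ≠ 0. Let p ∈ 𝔽_q[T] be the minimal polynomial of z over 𝔽_q and m = deg p (so m divides d). Let M be the r×r matrix over F[T] with M_{i,i+1} = 1 for 1 ≤ i ≤ r−1, last row ((T−z)/g_r, −g₁/g_r, …, −g_{r−1}/g_r), and all other entries 0; for k ≥ 0 let M^{(k)} be obtained from M by raising every F-coefficient of every entry to the q^k-th power (leaving T fixed), and set N = M^{(d−1)}·M^{(d−2)}·⋯·M^{(1)}·M. Write the characteristic polynomial of N as χ(X) = det(X·I_r − N) = X^r + a_{r−1}X^{r−1} + ⋯ + a_1X + a_0 with a_i ∈ F[T]. Then: (1) every a_i lies in the image of 𝔽_q[T] in F[T]; (2) for every i with 0 < i < r, the degree in T of a_i is at most (r−i)·d/r; and (3) a_0 = (−1)^{rd−d−r} · p^{d/m} / N_{F/𝔽_q}(g_r), where N_{F/𝔽_q} : F → 𝔽_q is the field norm. -/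

import Mathlib

/-- The matrix of the semilinear operator `τ` on the Anderson motive `𝐌(φ)` of the Drinfeld
module `φ_T = z + g₁τ + ⋯ + g_rτ^r`, in the canonical basis `(1, τ, …, τ^{r-1})`:
superdiagonal entries `1`, last row `((T−z)/g_r, −g₁/g_r, …, −g_{r−1}/g_r)`, zeros elsewhere. -/
noncomputable def motiveMatrix (F : Type*) [Field F] (r : ℕ) (z : F) (g : ℕ → F) :
    Matrix (Fin r) (Fin r) (Polynomial F) :=
  Matrix.of fun i j =>
    if (i : ℕ) + 1 = (j : ℕ) then 1
    else if (i : ℕ) = r - 1 then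
      (if (j : ℕ) = 0 then (Polynomial.X - Polynomial.C z) * Polynomial.C (g r)⁻¹
       else Polynomial.C (-(g (j : ℕ)) * (g r)⁻¹))
    else 0

/-- Raising every coefficient of a polynomial to the `e`-th power. -/
noncomputable def coeffPow (F : Type*) [Field F] (e : ℕ) (P : Polynomial F) : Polynomial F :=
  P.sum fun n a => Polynomial.C (a ^ e) * Polynomial.X ^ n

/-- The Frobenius matrix `N = M^{(d−1)}·M^{(d−2)}·⋯·M^{(1)}·M`, where `M^{(k)}` is obtained
from the motive matrix `M` by raising every `F`-coefficient of every entry to the `q^k`-th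
power: the matrix of the Frobenius endomorphism `τ^d` acting on the Anderson motive. -/
noncomputable def frobeniusMatrix (F : Type*) [Field F] (q r d : ℕ) (z : F) (g : ℕ → F) :
    Matrix (Fin r) (Fin r) (Polynomial F) :=
  (((List.range d).reverse).map fun k =>
    (motiveMatrix F r z g).map (coeffPow F (q ^ k))).prod

open Polynomial in
theorem coeffPow_eq_map (F : Type*) [Field F] (e : ℕ) (he : e ≠ 0) (s : F →+* F) (hs : ∀ x, s x = x ^ e)
    (P : F[X]) : coeffPow F e P = P.map s := by
  unfold coeffPow
  rw [Polynomial.map, Polynomial.eval₂_eq_sum]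
  simp [hs]

/-- The iterated relative Frobenius as a ring homomorphism. -/
noncomputable def frobHom (Fq F : Type*) [Field Fq] [Fintype Fq] [Field F] [Algebra Fq F] (k : ℕ) :
    F →+* F := ((FiniteField.frobeniusAlgHom Fq F) ^ k : F →ₐ[Fq] F)

theorem frobHom_apply (Fq F : Type*) [Field Fq] [Fintype Fq] [Field F] [Algebra Fq F] (k : ℕ)
    (x : F) : frobHom Fq F k x = x ^ (Fintype.card Fq ^ k) := by
  change ((FiniteField.frobeniusAlgHom Fq F) ^ k : F →ₐ[Fq] F) x = _
  rw [AlgHom.coe_pow, FiniteField.coe_frobeniusAlgHom, pow_iterate]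

theorem frobHom_comp_one (Fq F : Type*) [Field Fq] [Fintype Fq] [Field F] [Algebra Fq F] (k : ℕ) :
    (frobHom Fq F 1).comp (frobHom Fq F k) = frobHom Fq F (k+1) := by
  ext x
  simp [frobHom_apply, ← pow_mul, pow_succ]

theorem frobHom_finrank (Fq F : Type*) [Field Fq] [Fintype Fq] [Field F] [Algebra Fq F]
    [FiniteDimensional Fq F] :
    frobHom Fq F (Module.finrank Fq F) = RingHom.id F := by
  haveI : Finite F := Module.finite_of_finite Fq
  unfold frobHom
  rw [← FiniteField.orderOf_frobeniusAlgHom Fq F, pow_orderOf_eq_one]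
  rfl

theorem mem_range_of_frob (Fq F : Type*) [Field Fq] [Fintype Fq] [Field F] [Algebra Fq F]
    [FiniteDimensional Fq F] (x : F) (hx : frobHom Fq F 1 x = x) :
    x ∈ Set.range (algebraMap Fq F) := by
  haveI : Finite F := Module.finite_of_finite Fq
  rw [IsGalois.mem_range_algebraMap_iff_fixed]
  intro f
  obtain ⟨n, hn⟩ := (FiniteField.bijective_frobeniusAlgEquivOfAlgebraic_pow Fq F).2 f
  rw [← hn]
  simp only [AlgEquiv.coe_pow]
  apply Function.IsFixedPt.iterate
  rw [frobHom_apply, pow_one] at hx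
  exact hx

open Polynomial in
theorem exists_map_of_frob (Fq F : Type*) [Field Fq] [Fintype Fq] [Field F] [Algebra Fq F]
    [FiniteDimensional Fq F] (P : F[X]) (hx : P.map (frobHom Fq F 1) = P) :
    ∃ b : Fq[X], b.map (algebraMap Fq F) = P := by
  rw [← Polynomial.mem_lifts, Polynomial.lifts_iff_coeff_lifts]
  intro n
  apply mem_range_of_frob
  conv_rhs => rw [← hx]
  rw [coeff_map]

open Polynomial in
theorem prod_X_sub_eq (Fq F : Type*) [Field Fq] [Fintype Fq] [Field F] [Algebra Fq F]
    [FiniteDimensional Fq F] (z : F) :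
    ∏ k ∈ Finset.range (Module.finrank Fq F), (X - C (frobHom Fq F k z)) =
      ((minpoly Fq z) ^ (Module.finrank Fq F / (minpoly Fq z).natDegree)).map (algebraMap Fq F) := by
  have hint : IsIntegral Fq z := Algebra.IsIntegral.isIntegral z
  have hpm := minpoly.monic hint
  obtain ⟨b, hb⟩ := exists_map_of_frob Fq F
    (∏ k ∈ Finset.range (Module.finrank Fq F), (X - C (frobHom Fq F k z))) (by
      rw [Polynomial.map_prod]
      have hk : ∀ k, frobHom Fq F 1 (frobHom Fq F k z) = frobHom Fq F (k+1) z := fun k => by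
        rw [← frobHom_comp_one Fq F k]; rfl
      simp only [Polynomial.map_sub, map_X, map_C, hk]
      obtain ⟨e, he⟩ : ∃ e, Module.finrank Fq F = e + 1 :=
        ⟨Module.finrank Fq F - 1, (Nat.succ_pred_eq_of_pos Module.finrank_pos).symm⟩
      have h0 : frobHom Fq F (e+1) z = frobHom Fq F 0 z := by
        rw [← he, frobHom_finrank]; simp [frobHom_apply]
      rw [he, Finset.prod_range_succ, Finset.prod_range_succ', h0])
  have hbm : b.Monic := by
    apply Polynomial.monic_of_injective (algebraMap Fq F).injective
    rw [hb]
    exact monic_prod_of_monic _ _ fun i _ => monic_X_sub_C _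
  have hbd : b.natDegree = Module.finrank Fq F := by
    rw [← Polynomial.natDegree_map (algebraMap Fq F), hb,
      natDegree_prod_of_monic _ _ fun i _ => monic_X_sub_C _]
    simp
  have hdvd : b ∣ minpoly Fq z ^ (Module.finrank Fq F) := by
    rw [← Polynomial.map_dvd_map' (algebraMap Fq F), hb, Polynomial.map_pow]
    conv_rhs => rw [← Finset.card_range (Module.finrank Fq F), ← Finset.prod_const]
    apply Finset.prod_dvd_prod_of_dvd
    intro k _
    rw [dvd_iff_isRoot, IsRoot.def, eval_map_algebraMap]
    change aeval (((FiniteField.frobeniusAlgHom Fq F) ^ k : F →ₐ[Fq] F) z) _ = 0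
    rw [aeval_algHom_apply, minpoly.aeval, map_zero]
  obtain ⟨i, hi, hass⟩ := (dvd_prime_pow (minpoly.prime hint) _).1 hdvd
  have heq := eq_of_monic_of_associated hbm (hpm.pow i) hass
  have hdeg : Module.finrank Fq F = i * (minpoly Fq z).natDegree := by
    rw [← hbd, heq, natDegree_pow]
  rw [← hb, heq, hdeg, Nat.mul_div_cancel _ (minpoly.natDegree_pos hint)]

theorem motive_det (F : Type*) [Field F] (r : ℕ) (hr : 1 ≤ r) (z : F) (g : ℕ → F) :
    (motiveMatrix F r z g).det =
      (-1) ^ (r - 1) * ((Polynomial.X - Polynomial.C z) * Polynomial.C (g r)⁻¹) := by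
  obtain ⟨n, rfl⟩ : ∃ n, r = n + 1 := ⟨r - 1, by omega⟩
  rw [Matrix.det_succ_column_zero, Finset.sum_eq_single (Fin.last n)]
  · have : (motiveMatrix F (n+1) z g).submatrix (Fin.last n).succAbove Fin.succ = 1 := by
      ext1 i j
      have := i.2
      by_cases h : i = j
      · subst h; simp [motiveMatrix]
      · have h' : (i : ℕ) ≠ j := fun h' => h (Fin.ext h')
        simp [motiveMatrix, h, h', this.ne]
    rw [this]
    simp [motiveMatrix]
  · intro i _ hi
    have : (i : ℕ) ≠ n := fun h => hi (Fin.ext h)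
    simp [motiveMatrix, this]
  · simp

/-- Partial products `M^{(k-1)} ⋯ M`. -/
theorem frobeniusMatrix_succ (F : Type*) [Field F] (q r d : ℕ) (z : F) (g : ℕ → F) :
    frobeniusMatrix F q r (d+1) z g =
      (motiveMatrix F r z g).map (coeffPow F (q ^ d)) * frobeniusMatrix F q r d z g := by
  simp [frobeniusMatrix, List.range_succ]

theorem motive_map_eq (Fq F : Type*) [Field Fq] [Fintype Fq] [Field F] [Algebra Fq F]
    (r k : ℕ) (z : F) (g : ℕ → F) :
    (motiveMatrix F r z g).map (coeffPow F (Fintype.card Fq ^ k)) =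
      (Polynomial.mapRingHom (frobHom Fq F k)).mapMatrix (motiveMatrix F r z g) := by
  ext1 i j
  simp only [Matrix.map_apply, RingHom.mapMatrix_apply, Polynomial.coe_mapRingHom]
  exact coeffPow_eq_map F _ (pow_ne_zero _ Fintype.card_ne_zero) _ (frobHom_apply Fq F k) _

theorem frob_motive (Fq F : Type*) [Field Fq] [Fintype Fq] [Field F] [Algebra Fq F]
    (r k : ℕ) (z : F) (g : ℕ → F) :
    (Polynomial.mapRingHom (frobHom Fq F 1)).mapMatrix
      ((motiveMatrix F r z g).map (coeffPow F (Fintype.card Fq ^ k))) =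
      (motiveMatrix F r z g).map (coeffPow F (Fintype.card Fq ^ (k+1))) := by
  rw [motive_map_eq, motive_map_eq]
  ext1 i j
  simp [Polynomial.map_map, frobHom_comp_one]

theorem frobeniusMatrix_shift (Fq F : Type*) [Field Fq] [Fintype Fq] [Field F] [Algebra Fq F]
    (r d : ℕ) (z : F) (g : ℕ → F) :
    (Polynomial.mapRingHom (frobHom Fq F 1)).mapMatrix
      (frobeniusMatrix F (Fintype.card Fq) r d z g) *
        (motiveMatrix F r z g).map (coeffPow F (Fintype.card Fq ^ 0)) =
     frobeniusMatrix F (Fintype.card Fq) r (d+1) z g := by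
  induction d with
  | zero => simp [frobeniusMatrix]
  | succ d ih =>
    rw [frobeniusMatrix_succ, map_mul, frob_motive, mul_assoc, ih, ← frobeniusMatrix_succ]

theorem charpoly_frob (Fq F : Type*) [Field Fq] [Fintype Fq] [Field F] [Algebra Fq F]
    [FiniteDimensional Fq F] (r : ℕ) (z : F) (g : ℕ → F) :
    ((Polynomial.mapRingHom (frobHom Fq F 1)).mapMatrix
      (frobeniusMatrix F (Fintype.card Fq) r (Module.finrank Fq F) z g)).charpoly =
      (frobeniusMatrix F (Fintype.card Fq) r (Module.finrank Fq F) z g).charpoly := by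
  obtain ⟨e, he⟩ : ∃ e, Module.finrank Fq F = e + 1 :=
        ⟨Module.finrank Fq F - 1, (Nat.succ_pred_eq_of_pos Module.finrank_pos).symm⟩
  have h0 : (motiveMatrix F r z g).map (coeffPow F (Fintype.card Fq ^ (e+1))) =
      (motiveMatrix F r z g).map (coeffPow F (Fintype.card Fq ^ 0)) := by
    rw [motive_map_eq, motive_map_eq, ← he, frobHom_finrank]
    congr 2
  rw [he]
  conv_rhs => rw [← frobeniusMatrix_shift, Matrix.charpoly_mul_comm]
  rw [frobeniusMatrix_succ, map_mul, frob_motive, h0]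

open Polynomial in
theorem frobeniusMatrix_det (Fq F : Type*) [Field Fq] [Fintype Fq] [Field F] [Algebra Fq F]
    (r : ℕ) (hr : 1 ≤ r) (d : ℕ) (z : F) (g : ℕ → F) :
    (frobeniusMatrix F (Fintype.card Fq) r d z g).det = (-1) ^ ((r-1) * d) *
      ((∏ k ∈ Finset.range d, (X - C (frobHom Fq F k z))) *
        C (∏ k ∈ Finset.range d, (g r) ^ (Fintype.card Fq ^ k))⁻¹) := by
  induction d with
  | zero => simp [frobeniusMatrix]
  | succ d ih =>
    rw [frobeniusMatrix_succ, Matrix.det_mul, ih, motive_map_eq, ← RingHom.map_det, motive_det _ _ hr,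
      Finset.prod_range_succ, Finset.prod_range_succ]
    simp only [map_mul, map_pow, map_neg, map_one, map_sub, coe_mapRingHom, map_X, map_C, mul_inv,
      map_inv₀, frobHom_apply, mul_add, pow_add, mul_one]
    ring

/-- Weighted degree bound in `F[T]`. -/
def WT {F : Type*} [Field F] (r : ℕ) (w : ℤ) (f : Polynomial F) : Prop :=
  ∀ n, f.coeff n ≠ 0 → (r : ℤ) * n ≤ w

/-- Weighted degree bound in `F[T][X]`. -/
def WX {F : Type*} [Field F] (r d : ℕ) (w : ℤ) (f : Polynomial (Polynomial F)) : Prop :=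
  ∀ k n, (f.coeff k).coeff n ≠ 0 → (r : ℤ) * n + d * k ≤ w

section weights
variable {F : Type*} [Field F] {r d : ℕ}

theorem WT.sum {ι : Type*} {w : ℤ} (s : Finset ι) (f : ι → Polynomial F)
    (h : ∀ i ∈ s, WT r w (f i)) : WT r w (∑ i ∈ s, f i) := by
  intro n hn
  rw [Polynomial.finsetSum_coeff] at hn
  obtain ⟨i, hi, hne⟩ := Finset.exists_ne_zero_of_sum_ne_zero hn
  exact h i hi n hne

theorem WT.mul {w v : ℤ} {f g : Polynomial F} (hf : WT r w f) (hg : WT r v g) :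
    WT r (w + v) (f * g) := by
  intro n hn
  rw [Polynomial.coeff_mul] at hn
  obtain ⟨⟨i, j⟩, hi, hne⟩ := Finset.exists_ne_zero_of_sum_ne_zero hn
  have h1 := hf i (left_ne_zero_of_mul hne)
  have h2 := hg j (right_ne_zero_of_mul hne)
  rw [Finset.HasAntidiagonal.mem_antidiagonal] at hi
  simp only at hi
  subst hi
  push_cast
  linarith

theorem WX.sum {ι : Type*} {w : ℤ} (s : Finset ι) (f : ι → Polynomial (Polynomial F))
    (h : ∀ i ∈ s, WX r d w (f i)) : WX r d w (∑ i ∈ s, f i) := by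
  intro k n hn
  rw [Polynomial.finsetSum_coeff, Polynomial.finsetSum_coeff] at hn
  obtain ⟨i, hi, hne⟩ := Finset.exists_ne_zero_of_sum_ne_zero hn
  exact h i hi k n hne

theorem WX.mul {w v : ℤ} {f g : Polynomial (Polynomial F)} (hf : WX r d w f) (hg : WX r d v g) :
    WX r d (w + v) (f * g) := by
  intro k n hn
  rw [Polynomial.coeff_mul, Polynomial.finsetSum_coeff] at hn
  obtain ⟨⟨k1, k2⟩, hk, hne⟩ := Finset.exists_ne_zero_of_sum_ne_zero hn
  rw [Polynomial.coeff_mul] at hne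
  obtain ⟨⟨i, j⟩, hi, hne⟩ := Finset.exists_ne_zero_of_sum_ne_zero hne
  have h1 := hf k1 i (left_ne_zero_of_mul hne)
  have h2 := hg k2 j (right_ne_zero_of_mul hne)
  rw [Finset.HasAntidiagonal.mem_antidiagonal] at hi hk
  simp only at hi hk
  subst hi hk
  push_cast
  linarith

theorem WX.one : WX r d 0 (1 : Polynomial (Polynomial F)) := by
  intro k n hn
  rw [Polynomial.coeff_one] at hn
  split_ifs at hn with h
  · rw [Polynomial.coeff_one] at hn
    split_ifs at hn with h'
    · subst h h'; simp
    · simp at hn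
  · simp at hn

theorem WX.prod {ι : Type*} (s : Finset ι) (w : ι → ℤ) (f : ι → Polynomial (Polynomial F))
    (h : ∀ i, WX r d (w i) (f i)) : WX r d (∑ i ∈ s, w i) (∏ i ∈ s, f i) := by
  classical
  induction s using Finset.induction_on with
  | empty => simpa using WX.one
  | insert a s ha ih =>
    rw [Finset.sum_insert ha, Finset.prod_insert ha]
    exact (h a).mul ih

theorem WX.charpoly (A : Matrix (Fin r) (Fin r) (Polynomial F))
    (hA : ∀ i j : Fin r, WT r ((d : ℤ) + i - j) (A i j)) : WX r d ((r : ℤ) * d) A.charpoly := by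
  have key : ∀ i j : Fin r, WX r d ((d : ℤ) + i - j) (A.charmatrix i j) := by
    intro i j k n hn
    rw [Matrix.charmatrix_apply, Polynomial.coeff_sub, Polynomial.coeff_sub] at hn
    by_cases h2 : ((Polynomial.C (A i j)).coeff k).coeff n = 0
    · rw [h2, sub_zero] at hn
      by_cases hij : i = j
      · subst hij
        rw [Matrix.diagonal_apply_eq, Polynomial.coeff_X] at hn
        split_ifs at hn with h
        · rw [Polynomial.coeff_one] at hn
          split_ifs at hn with h'
          · simp [← h, h']
          · simp at hn
        · simp at hn
      · rw [Matrix.diagonal_apply_ne _ hij] at hn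
        simp at hn
    · rw [Polynomial.coeff_C] at h2
      split_ifs at h2 with h
      · have := hA i j n h2
        simpa [h] using this
      · simp at h2
  unfold Matrix.charpoly
  rw [Matrix.det_apply]
  apply WX.sum
  intro s _
  have h : WX r d (∑ i, ((d : ℤ) + (s i : Fin r) - i)) (∏ i, A.charmatrix (s i) i) :=
    WX.prod _ _ _ fun i => key _ _
  have hs : ∑ i : Fin r, ((d : ℤ) + (s i : Fin r) - i) = (r : ℤ) * d := by
    rw [Finset.sum_sub_distrib, Finset.sum_add_distrib,
      Equiv.sum_comp s (fun i : Fin r => ((i : ℕ) : ℤ))]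
    simp
  rw [hs] at h
  intro k n hn
  apply h k n
  intro h0
  apply hn
  rcases Int.units_eq_one_or (Equiv.Perm.sign s) with h1 | h1 <;> simp [h1, h0]

theorem motive_WT (Fq : Type*) [Field Fq] [Fintype Fq] [Algebra Fq F] (z : F) (g : ℕ → F) (e : ℕ)
    (i j : Fin r) :
    WT r (1 + (i : ℤ) - j)
      ((motiveMatrix F r z g).map (coeffPow F (Fintype.card Fq ^ e)) i j) := by
  rw [motive_map_eq]
  intro n hn
  simp only [RingHom.mapMatrix_apply, Matrix.map_apply, Polynomial.coe_mapRingHom,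
    Polynomial.coeff_map] at hn
  replace hn : (motiveMatrix F r z g i j).coeff n ≠ 0 := fun h => hn (by rw [h, map_zero])
  have hi := i.2
  have hj := j.2
  simp only [motiveMatrix, Matrix.of_apply] at hn
  split_ifs at hn with h1 h2 h3
  · rw [Polynomial.coeff_one] at hn
    split_ifs at hn with h
    · subst h; simp; omega
    · simp at hn
  · have hn1 : n ≤ 1 := by
      by_contra hlt
      apply hn
      rw [Polynomial.coeff_mul_C, Polynomial.coeff_sub, Polynomial.coeff_X, Polynomial.coeff_C,
        if_neg (by omega), if_neg (by omega)]
      simp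
    have : (r : ℤ) * n ≤ r * 1 := by gcongr; exact_mod_cast hn1
    omega
  · rw [Polynomial.coeff_C] at hn
    split_ifs at hn with h
    · subst h; simp; omega
    · simp at hn
  · simp at hn

theorem frobeniusMatrix_WT (Fq : Type*) [Field Fq] [Fintype Fq] [Algebra Fq F] (z : F) (g : ℕ → F)
    (e : ℕ) (i j : Fin r) :
    WT r ((e : ℤ) + i - j) (frobeniusMatrix F (Fintype.card Fq) r e z g i j) := by
  induction e generalizing i j with
  | zero =>
    intro n hn
    simp only [frobeniusMatrix, List.range_zero, List.reverse_nil, List.map_nil, List.prod_nil] at hn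
    by_cases hij : i = j
    · subst hij
      rw [Matrix.one_apply_eq, Polynomial.coeff_one] at hn
      split_ifs at hn with h
      · subst h; simp
      · simp at hn
    · rw [Matrix.one_apply_ne hij] at hn
      simp at hn
  | succ e ih =>
    rw [frobeniusMatrix_succ, Matrix.mul_apply]
    apply WT.sum
    intro k _
    have := (motive_WT Fq z g e i k).mul (ih k j)
    convert this using 1
    push_cast
    ring

end weights

/-- Bounds on the characteristic polynomial `χ(X) = X^r + a_{r−1}X^{r−1} + ⋯ + a_0` of the
Frobenius endomorphism of a rank-`r` Drinfeld module over a finite `A`-field `(F, z)` with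
`[F : 𝔽_q] = d`: (1) every `a_i` comes from `𝔽_q[T]`; (2) `deg_T a_i ≤ (r−i)·d/r` for
`0 < i < r`; (3) `a_0 = (−1)^{rd−d−r}·p^{d/m}/N_{F/𝔽_q}(g_r)` where `p` is the minimal
polynomial of `z` over `𝔽_q` and `m = deg p`. -/
theorem frobenius_charpoly_coeff_bounds
    (Fq : Type*) [Field Fq] [Fintype Fq] (q : ℕ) (hq : Fintype.card Fq = q)
    (F : Type*) [Field F] [Algebra Fq F] [FiniteDimensional Fq F]
    (d : ℕ) (hd : Module.finrank Fq F = d)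
    (z : F) (r : ℕ) (hr : 1 ≤ r) (g : ℕ → F) (hgr : g r ≠ 0)
    (p : Polynomial Fq) (hp : p = minpoly Fq z) (m : ℕ) (hm : m = p.natDegree) :
    let χ := (frobeniusMatrix F q r d z g).charpoly
    (∀ i : ℕ, ∃ b : Polynomial Fq, Polynomial.map (algebraMap Fq F) b = χ.coeff i) ∧
    (∀ i : ℕ, 0 < i → i < r → r * (χ.coeff i).natDegree ≤ (r - i) * d) ∧
    (χ.coeff 0 =
      Polynomial.C (((-1 : F) ^ ((r : ℤ) * d - d - r)) *
          (algebraMap Fq F (Algebra.norm Fq (g r)))⁻¹) *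
        Polynomial.map (algebraMap Fq F) (p ^ (d / m))) := by
  have : Finite F := Module.finite_of_finite Fq
  subst hq hd hp hm
  intro χ
  refine ⟨?_, ?_, ?_⟩
  · intro i
    apply exists_map_of_frob
    have h := charpoly_frob Fq F r z g
    have h' : χ.map (Polynomial.mapRingHom (frobHom Fq F 1)) = χ := by
      rw [← Matrix.charpoly_map]
      exact h
    conv_rhs => rw [← h']
    rw [Polynomial.coeff_map]
    rfl
  · intro i h0 hi
    by_cases hz : χ.coeff i = 0
    · simp [hz]
    have h := WX.charpoly (r := r) (d := Module.finrank Fq F) _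
      (fun a b => frobeniusMatrix_WT Fq z g (Module.finrank Fq F) a b) i (χ.coeff i).natDegree
      (by
        change (χ.coeff i).coeff _ ≠ 0
        rw [Polynomial.coeff_natDegree]
        exact Polynomial.leadingCoeff_ne_zero.2 hz)
    zify [hi.le]
    linarith
  · have hdet := frobeniusMatrix_det Fq F r hr (Module.finrank Fq F) z g
    have hc : χ.coeff 0 = (-1) ^ r *
        (frobeniusMatrix F (Fintype.card Fq) r (Module.finrank Fq F) z g).det := by
      rw [Matrix.det_eq_sign_charpoly_coeff, Fintype.card_fin, ← mul_assoc, ← pow_add, ← two_mul,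
        pow_mul]
      simp [χ]
    have hsign : ((-1 : F) ^ ((r : ℤ) * (Module.finrank Fq F : ℕ) - (Module.finrank Fq F : ℕ) - r)) =
        (-1) ^ r * (-1) ^ ((r-1) * Module.finrank Fq F) := by
      have hne : (-1 : F) ≠ 0 := by simp
      have : (r : ℤ) * (Module.finrank Fq F : ℕ) - (Module.finrank Fq F : ℕ) - r =
          ((r + (r-1) * Module.finrank Fq F : ℕ) : ℤ) - ((2 * r : ℕ) : ℤ) := by
        push_cast [hr]; ring
      rw [this, zpow_sub₀ hne, zpow_natCast, zpow_natCast, pow_mul _ 2 r, pow_add]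
      simp
    rw [hc, hdet, prod_X_sub_eq, hsign, FiniteField.algebraMap_norm_eq_prod_pow,
      Nat.card_eq_fintype_card]
    simp only [map_mul, map_pow, map_neg, map_one]
    ring
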